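/- Let d, r ∈ ℕ with r ≥ 1, let γ > 0 be real, let α > 9/2 be real, and let v̂ : ℤ^d → ℂ satisfy ‖v̂‖_α < ∞. Then there exists a constant c₂ > 0, depending only on d, α, γ and v̂ (in particular independent of the moduli, the generating vectors, the anti-aliasing family and the vector y), such that for all moduli n_1,…,n_r ≥ 1, all generating vectors z_1,…,z_r ∈ ℤ^d, every minimal anti-aliasing family (h_ξ)_{ξ ∈ ℤ_{n_1}×⋯×ℤ_{n_r}}, and every y ∈ ℂ^{ℤ_{n_1}×⋯×ℤ_{n_r}}: ‖(D(DW − WD) − (DW − WD)D) y‖₂ ≤ c₂ · ‖(D + I)² y‖₂, where D, W are the matrices defined in the context and I is the identity matrix. -/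

import Mathlib

noncomputable section

/-- Integer dot product on `ℤ^d`. -/
def dotZ {d : ℕ} (h z : Fin d → ℤ) : ℤ := ∑ i, h i * z i

/-- The squared Korobov weight `r_α(h)² = ∏_j max(|h_j|^(2α), 1)`. -/
def korWeightSq {d : ℕ} (α : ℝ) (h : Fin d → ℤ) : ℝ :=
  ∏ j, max (|(h j : ℝ)| ^ (2 * α)) 1

/-- The squared Euclidean norm `‖h‖₂² = Σ_j h_j²` of `h ∈ ℤ^d`. -/
def normSq {d : ℕ} (h : Fin d → ℤ) : ℝ := ∑ j, (h j : ℝ) ^ 2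

/-- The Euclidean norm of a complex vector. -/
def vecNorm {ι : Type*} [Fintype ι] (y : ι → ℂ) : ℝ := Real.sqrt (∑ ξ, ‖y ξ‖ ^ 2)

/-- The diagonal matrix `D` with entries `2π²γ‖h_ξ‖₂²`, indexed by the
multi-indices `ξ ∈ ℤ_{n_1} × ⋯ × ℤ_{n_r}`. -/
def DmatR {d r : ℕ} (γ : ℝ) (n : Fin r → ℕ)
    (hfam : ((j : Fin r) → Fin (n j)) → Fin d → ℤ) :
    Matrix ((j : Fin r) → Fin (n j)) ((j : Fin r) → Fin (n j)) ℂ :=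
  Matrix.diagonal fun ξ => ((2 * Real.pi ^ 2 * γ * normSq (hfam ξ) : ℝ) : ℂ)

/-- The multiplication matrix `W` with entries
`W_{ξ,ξ'} = (1/γ) Σ_{h·z_j ≡ ξ_j−ξ'_j (mod n_j) ∀j} v̂(h)`. -/
def WmatR {d r : ℕ} (γ : ℝ) (vhat : (Fin d → ℤ) → ℂ) (n : Fin r → ℕ)
    (z : Fin r → Fin d → ℤ) :
    Matrix ((j : Fin r) → Fin (n j)) ((j : Fin r) → Fin (n j)) ℂ :=
  Matrix.of fun ξ ξ' => (1 / (γ : ℂ)) *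
    ∑' h : {h : Fin d → ℤ // ∀ j,
        ((dotZ h (z j) : ZMod (n j))) = ((ξ j : ℕ) : ZMod (n j)) - ((ξ' j : ℕ) : ZMod (n j))},
      vhat h.1

/-!
If `h` contributes to `W_{ξ,ξ'}`, then `h_ξ' + h` lies in the class of `ξ` and `h_ξ - h` in that of
`ξ'`, so minimality yields `|‖h_ξ‖ - ‖h_ξ'‖| ≤ ‖h‖`. Writing `λ_ξ` for the diagonal entries of `D`,
this bounds `(λ_ξ - λ_ξ')² |v̂(h)|`, a term of the entry of `[D,[D,W]]`, by a multiple of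
`(1 + ‖h‖²)² |v̂(h)| (1 + λ_ξ')`. The factor `1 + λ_ξ'` is the entry of `D + I`; the rest is summed
by Schur's test, since each row and each column of `W` splits a subset of `ℤ^d` into disjoint
classes. This already gives the bound with `D + I` in place of `(D + I)²`. The Korobov condition
enters only through Cauchy–Schwarz, as `Σ |v̂(h)| (1 + ‖h‖²)² < ∞`.
-/

open Matrix

section VecNorm

variable {m n : Type*} [Fintype m] [Fintype n]

lemma vecNorm_nonneg (y : n → ℂ) : 0 ≤ vecNorm y :=
  Real.sqrt_nonneg _

lemma vecNorm_sq (y : n → ℂ) : vecNorm y ^ 2 = ∑ j, ‖y j‖ ^ 2 :=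
  Real.sq_sqrt (by positivity)

lemma vecNorm_mono {x y : n → ℂ} (h : ∀ j, ‖x j‖ ≤ ‖y j‖) : vecNorm x ≤ vecNorm y := by
  unfold vecNorm
  gcongr with j
  exact h j

lemma vecNorm_mulVec_le_of_schur_test [DecidableEq n] {M : Matrix m n ℂ} {G : m → n → ℝ} {w : n → ℂ}
    {A B : ℝ} (hG : ∀ i j, 0 ≤ G i j) (hM : ∀ i j, ‖M i j‖ ≤ G i j * ‖w j‖) (hA : 0 ≤ A)
    (hrow : ∀ i, ∑ j, G i j ≤ A) (hcol : ∀ j, ∑ i, G i j ≤ B) (y : n → ℂ) :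
    vecNorm (M *ᵥ y) ≤ √(A * B) * vecNorm (diagonal w *ᵥ y) := by
  set u := diagonal w *ᵥ y
  have norm_apply_le (i : m) : ‖(M *ᵥ y) i‖ ≤ ∑ j, G i j * ‖u j‖ :=
    (norm_sum_le _ _).trans <| Finset.sum_le_sum fun j _ => by
      simpa only [u, mulVec_diagonal, norm_mul, mul_assoc] using
        mul_le_mul_of_nonneg_right (hM i j) (norm_nonneg (y j))
  have cauchy_schwarz (i : m) :
      (∑ j, G i j * ‖u j‖) ^ 2 ≤ (∑ j, G i j) * ∑ j, G i j * ‖u j‖ ^ 2 :=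
    Finset.sum_sq_le_sum_mul_sum_of_sq_le_mul _ (fun j _ => hG i j)
      (fun j _ => mul_nonneg (hG i j) (sq_nonneg _)) fun j _ => le_of_eq (by ring)
  have sum_sq_le : ∑ i, ‖(M *ᵥ y) i‖ ^ 2 ≤ A * B * ∑ j, ‖u j‖ ^ 2 :=
    calc ∑ i, ‖(M *ᵥ y) i‖ ^ 2
      _ ≤ ∑ i, A * ∑ j, G i j * ‖u j‖ ^ 2 := Finset.sum_le_sum fun i _ =>
          ((pow_le_pow_left₀ (norm_nonneg _) (norm_apply_le i) 2).trans (cauchy_schwarz i)).trans <|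
            mul_le_mul_of_nonneg_right (hrow i) <|
              Finset.sum_nonneg fun j _ => mul_nonneg (hG i j) (sq_nonneg _)
      _ = A * ∑ j, (∑ i, G i j) * ‖u j‖ ^ 2 := by
          simp_rw [← Finset.mul_sum, Finset.sum_mul]
          rw [Finset.sum_comm]
      _ ≤ A * ∑ j, B * ‖u j‖ ^ 2 := by
          gcongr with j
          exact hcol j
      _ = A * B * ∑ j, ‖u j‖ ^ 2 := by rw [← Finset.mul_sum, mul_assoc]
  rw [← vecNorm_sq, ← vecNorm_sq] at sum_sq_le
  calc vecNorm (M *ᵥ y)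
    _ ≤ √(A * B * vecNorm u ^ 2) := Real.le_sqrt_of_sq_le sum_sq_le
    _ = √(A * B) * vecNorm u := by
        rw [Real.sqrt_mul' _ (sq_nonneg _), Real.sqrt_sq (vecNorm_nonneg u)]

lemma vecNorm_diagonal_add_one_mulVec_le_sq [DecidableEq n] {a : n → ℝ} (ha : ∀ j, 0 ≤ a j)
    (y : n → ℂ) :
    vecNorm ((diagonal (fun j => (a j : ℂ)) + 1) *ᵥ y) ≤
      vecNorm (((diagonal (fun j => (a j : ℂ)) + 1) ^ 2) *ᵥ y) := by
  have one_le_norm (j : n) : 1 ≤ ‖(a j : ℂ) + 1‖ := by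
    rw [← Complex.ofReal_one, ← Complex.ofReal_add, Complex.norm_real]
    exact (le_add_of_nonneg_left (ha j)).trans (Real.le_norm_self _)
  refine vecNorm_mono fun j => ?_
  rw [← diagonal_one, diagonal_add, diagonal_pow, mulVec_diagonal, mulVec_diagonal, norm_mul,
    norm_mul, Pi.pow_apply, norm_pow]
  gcongr
  exact le_self_pow₀ (one_le_norm j) two_ne_zero

end VecNorm

lemma lie_diagonal_lie_diagonal_apply {n R : Type*} [Fintype n] [DecidableEq n] [CommRing R]
    (a : n → R) (M : Matrix n n R) (i j : n) :
    ⁅diagonal a, ⁅diagonal a, M⁆⁆ i j = (a i - a j) ^ 2 * M i j := by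
  simp only [Ring.lie_def, Matrix.sub_apply, diagonal_mul, mul_diagonal]
  ring

lemma sq_mul_sq_sub_mul_sq_le {τ a b m : ℝ} (hτ : 0 ≤ τ) (h : |a - b| ≤ m) :
    (τ * a ^ 2 - τ * b ^ 2) ^ 2 ≤ 4 * τ * (τ + 1) * (1 + m ^ 2) ^ 2 * (1 + τ * b ^ 2) := by
  have sub_sq_le : (a - b) ^ 2 ≤ m ^ 2 := sq_le_sq' (abs_le.mp h).1 (abs_le.mp h).2
  have add_sq_le : (a + b) ^ 2 ≤ ((a - b) ^ 2 + 4) * (1 + b ^ 2) := by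
    nlinarith only [sq_nonneg ((a - b) * b - 2)]
  have mul_le : τ * (1 + b ^ 2) ≤ (τ + 1) * (1 + τ * b ^ 2) := by
    nlinarith only [mul_nonneg (mul_nonneg hτ hτ) (sq_nonneg b)]
  have quartic_le : m ^ 2 * (m ^ 2 + 4) ≤ 4 * (1 + m ^ 2) ^ 2 := by
    nlinarith only [sq_nonneg (m ^ 2), sq_nonneg m]
  calc (τ * a ^ 2 - τ * b ^ 2) ^ 2
    _ = τ ^ 2 * ((a - b) ^ 2 * (a + b) ^ 2) := by ring
    _ ≤ τ ^ 2 * (m ^ 2 * ((m ^ 2 + 4) * (1 + b ^ 2))) := by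
        grw [add_sq_le, sub_sq_le, sub_sq_le]
    _ = τ * (m ^ 2 * (m ^ 2 + 4)) * (τ * (1 + b ^ 2)) := by ring
    _ ≤ τ * (4 * (1 + m ^ 2) ^ 2) * ((τ + 1) * (1 + τ * b ^ 2)) := by
        grw [quartic_le, mul_le]
    _ = 4 * τ * (τ + 1) * (1 + m ^ 2) ^ 2 * (1 + τ * b ^ 2) := by ring

lemma sum_tsum_fiber_le_tsum {ι X G : Type*} [Fintype ι] {f : X → G} {k : ι → G}
    (hk : Function.Injective k) {g : X → ℝ} (hg₀ : ∀ x, 0 ≤ g x) (hg : Summable g) :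
    ∑ i, ∑' x : {x // f x = k i}, g x ≤ ∑' x, g x := by
  have inj : Function.Injective fun p : (i : ι) × {x // f x = k i} => (p.2 : X) := by
    rintro ⟨i, x, hx⟩ ⟨j, _, hy⟩ rfl
    obtain rfl := hk (hx.symm.trans hy)
    rfl
  calc ∑ i, ∑' x : {x // f x = k i}, g x
    _ = ∑' p : (i : ι) × {x // f x = k i}, g p.2 := by
        rw [← tsum_fintype (L := .unconditional ι)]
        exact (hg.comp_injective inj).tsum_sigma.symm
    _ ≤ ∑' x, g x := tsum_comp_le_tsum_of_inj hg hg₀ inj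

section Aliasing

variable {L G ι : Type*} [AddCommGroup L] [AddCommGroup G]

/-- The matrix of multiplication by a function with Fourier coefficients `v`, where frequencies
with the same image under `φ` are identified and `e i` is the frequency class of index `i`. -/
def aliasMatrix (φ : L →+ G) (e : ι → G) (v : L → ℂ) : Matrix ι ι ℂ :=
  of fun i j => ∑' h : {h // φ h = e i - e j}, v h

/-- The family `x` picks, in each frequency class `e i`, a representative of least length `p`. -/
structure IsMinimalAntiAliasing (p : AddGroupSeminorm L) (φ : L →+ G) (e : ι → G)
    (x : ι → L) : Prop where
  map_eq : ∀ i, φ (x i) = e i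
  le_of_map_eq : ∀ i h, φ h = e i → p (x i) ≤ p h

variable {p : AddGroupSeminorm L} {φ : L →+ G} {e : ι → G} {x : ι → L}

lemma IsMinimalAntiAliasing.abs_sub_le (hx : IsMinimalAntiAliasing p φ e x) {i j : ι} {h : L}
    (hh : φ h = e i - e j) : |p (x i) - p (x j)| ≤ p h := by
  have le_add : p (x i) ≤ p (x j) + p h :=
    (hx.le_of_map_eq i (x j + h) (by rw [map_add, hx.map_eq, hh, add_sub_cancel])).trans
      (map_add_le_add p _ _)
  have ge_sub : p (x j) ≤ p (x i) + p h :=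
    (hx.le_of_map_eq j (x i - h) (by rw [map_sub, hx.map_eq, hh, sub_sub_cancel])).trans
      (map_sub_le_add p _ _)
  exact abs_sub_le_iff.mpr ⟨by linarith, by linarith⟩

variable {v : L → ℂ}

lemma summable_norm_of_summable_norm_mul_sq (hv : Summable fun h => ‖v h‖ * (1 + p h ^ 2) ^ 2) :
    Summable fun h => ‖v h‖ :=
  hv.of_nonneg_of_le (fun _ => norm_nonneg _) fun _ =>
    le_mul_of_one_le_right (norm_nonneg _) (one_le_pow₀ (le_add_of_nonneg_right (sq_nonneg _)))

lemma norm_lie_lie_aliasMatrix_apply_le [Fintype ι] [DecidableEq ι] {τ : ℝ} (hτ : 0 ≤ τ)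
    (hx : IsMinimalAntiAliasing p φ e x) (hv : Summable fun h => ‖v h‖ * (1 + p h ^ 2) ^ 2)
    (i j : ι) :
    let D : Matrix ι ι ℂ := diagonal fun i => ((τ * p (x i) ^ 2 : ℝ) : ℂ)
    ‖⁅D, ⁅D, aliasMatrix φ e v⁆⁆ i j‖ ≤
      4 * τ * (τ + 1) * (∑' h : {h // φ h = e i - e j}, ‖v h‖ * (1 + p h ^ 2) ^ 2) *
        (1 + τ * p (x j) ^ 2) := by
  intro D
  have hv₀ := summable_norm_of_summable_norm_mul_sq hv
  set δ := (τ * p (x i) ^ 2 - τ * p (x j) ^ 2) ^ 2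
  calc ‖⁅D, ⁅D, aliasMatrix φ e v⁆⁆ i j‖
    _ = δ * ‖∑' h : {h // φ h = e i - e j}, v h‖ := by
        rw [lie_diagonal_lie_diagonal_apply, ← Complex.ofReal_sub, ← Complex.ofReal_pow, norm_mul,
          Complex.norm_real, Real.norm_of_nonneg (sq_nonneg _), aliasMatrix, of_apply]
    _ ≤ δ * ∑' h : {h // φ h = e i - e j}, ‖v h‖ := by
        gcongr
        exact norm_tsum_le_tsum_norm (hv₀.subtype _)
    _ = ∑' h : {h // φ h = e i - e j}, δ * ‖v h‖ := tsum_mul_left.symm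
    _ ≤ ∑' h : {h // φ h = e i - e j},
          4 * τ * (τ + 1) * (‖v h‖ * (1 + p h ^ 2) ^ 2) * (1 + τ * p (x j) ^ 2) := by
        refine Summable.tsum_le_tsum (fun h => ?_) ((hv₀.subtype _).mul_left _)
          (((hv.subtype _).mul_left _).mul_right _)
        grw [show δ ≤ _ from sq_mul_sq_sub_mul_sq_le hτ (hx.abs_sub_le h.2)]
        exact le_of_eq (by ring)
    _ = _ := by rw [tsum_mul_right, tsum_mul_left]

theorem vecNorm_lie_lie_aliasMatrix_mulVec_le [Fintype ι] [DecidableEq ι] {τ : ℝ} (hτ : 0 ≤ τ)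
    (he : Function.Injective e) (hx : IsMinimalAntiAliasing p φ e x)
    (hv : Summable fun h => ‖v h‖ * (1 + p h ^ 2) ^ 2) (y : ι → ℂ) :
    let D : Matrix ι ι ℂ := diagonal fun i => ((τ * p (x i) ^ 2 : ℝ) : ℂ)
    vecNorm (⁅D, ⁅D, aliasMatrix φ e v⁆⁆ *ᵥ y) ≤
      4 * τ * (τ + 1) * (∑' h, ‖v h‖ * (1 + p h ^ 2) ^ 2) * vecNorm ((D + 1) *ᵥ y) := by
  intro D
  set g : L → ℝ := fun h => ‖v h‖ * (1 + p h ^ 2) ^ 2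
  have hg₀ (h : L) : 0 ≤ g h := by positivity
  set K := 4 * τ * (τ + 1)
  have hK : 0 ≤ K := by positivity
  have D_add_one : D + 1 = diagonal fun j => ((1 + τ * p (x j) ^ 2 : ℝ) : ℂ) := by
    rw [← diagonal_one, diagonal_add]
    push_cast
    simp only [add_comm]
  have schur := vecNorm_mulVec_le_of_schur_test (M := ⁅D, ⁅D, aliasMatrix φ e v⁆⁆)
    (G := fun i j => K * ∑' h : {h // φ h = e i - e j}, g h)
    (w := fun j => ((1 + τ * p (x j) ^ 2 : ℝ) : ℂ)) (A := K * ∑' h, g h) (B := K * ∑' h, g h)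
    (fun _ _ => mul_nonneg hK (tsum_nonneg fun _ => hg₀ _))
    (fun i j => by
      rw [Complex.norm_real, Real.norm_of_nonneg (by positivity)]
      exact norm_lie_lie_aliasMatrix_apply_le hτ hx hv i j)
    (mul_nonneg hK (tsum_nonneg hg₀))
    (fun i => by
      rw [← Finset.mul_sum]
      gcongr
      exact sum_tsum_fiber_le_tsum (sub_right_injective.comp he) hg₀ hv)
    (fun j => by
      rw [← Finset.mul_sum]
      gcongr
      exact sum_tsum_fiber_le_tsum (sub_left_injective.comp he) hg₀ hv) y
  rwa [Real.sqrt_mul_self (mul_nonneg hK (tsum_nonneg hg₀)), ← D_add_one] at schur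

end Aliasing

section Korobov

lemma summable_prod_pi {ι : Type*} [Fintype ι] {κ : ι → Type*} {f : ∀ i, κ i → ℝ}
    (hf₀ : ∀ i k, 0 ≤ f i k) (hf : ∀ i, Summable (f i)) :
    Summable fun x : ∀ i, κ i => ∏ i, f i (x i) := by
  classical
  refine summable_of_sum_le (c := ∏ i, ∑' k, f i k)
    (fun x => Finset.prod_nonneg fun i _ => hf₀ i _) fun s => ?_
  have subset : s ⊆ Fintype.piFinset fun i => s.image (· i) := fun x hx =>
    Fintype.mem_piFinset.mpr fun i => Finset.mem_image_of_mem _ hx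
  calc ∑ x ∈ s, ∏ i, f i (x i)
    _ ≤ ∑ x ∈ Fintype.piFinset fun i => s.image (· i), ∏ i, f i (x i) :=
        Finset.sum_le_sum_of_subset_of_nonneg subset fun x _ _ =>
          Finset.prod_nonneg fun i _ => hf₀ i _
    _ = ∏ i, ∑ k ∈ s.image (· i), f i k := (Finset.prod_univ_sum _ _).symm
    _ ≤ ∏ i, ∑' k, f i k := Finset.prod_le_prod
        (fun i _ => Finset.sum_nonneg fun k _ => hf₀ i k)
        fun i _ => (hf i).sum_le_tsum _ fun k _ => hf₀ i k

lemma summable_int_inv_max_abs_rpow_one {b : ℝ} (hb : 1 < b) :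
    Summable fun k : ℤ => (max (|(k : ℝ)| ^ b) 1)⁻¹ := by
  refine (Real.summable_abs_int_rpow hb).congr_cofinite ?_
  filter_upwards [(Set.finite_singleton (0 : ℤ)).compl_mem_cofinite] with k hk
  have one_le_abs : 1 ≤ |(k : ℝ)| := mod_cast Int.one_le_abs hk
  rw [max_eq_left (Real.one_le_rpow one_le_abs (by linarith)), Real.rpow_neg (abs_nonneg _)]

variable {d : ℕ}

lemma korWeightSq_pos (α : ℝ) (h : Fin d → ℤ) : 0 < korWeightSq α h :=
  Finset.prod_pos fun _ _ => zero_lt_one.trans_le (le_max_right _ _)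

lemma korWeightSq_add {α β : ℝ} (hα : 0 ≤ α) (hβ : 0 ≤ β) (h : Fin d → ℤ) :
    korWeightSq (α + β) h = korWeightSq α h * korWeightSq β h := by
  have max_rpow {s : ℝ} (hs : 0 ≤ s) (t : ℝ) (ht : 0 ≤ t) :
      max (t ^ (2 * s)) 1 = max t 1 ^ (2 * s) := by
    rw [(Real.monotoneOn_rpow_Ici_of_exponent_nonneg (by positivity)).map_max ht
      (Set.mem_Ici.mpr zero_le_one), Real.one_rpow]
  simp only [korWeightSq, ← Finset.prod_mul_distrib]
  refine Finset.prod_congr rfl fun j _ => ?_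
  rw [max_rpow hα _ (abs_nonneg _), max_rpow hβ _ (abs_nonneg _),
    max_rpow (add_nonneg hα hβ) _ (abs_nonneg _), mul_add, Real.rpow_add (by positivity)]

lemma summable_inv_korWeightSq {α : ℝ} (hα : 1 / 2 < α) :
    Summable fun h : Fin d → ℤ => (korWeightSq α h)⁻¹ := by
  simp only [korWeightSq, ← Finset.prod_inv_distrib]
  exact summable_prod_pi (f := fun (_ : Fin d) (k : ℤ) => (max (|(k : ℝ)| ^ (2 * α)) 1)⁻¹)
    (fun _ _ => by positivity) fun _ => summable_int_inv_max_abs_rpow_one (by linarith)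

lemma summable_norm_mul_korWeightSq {E : Type*} [SeminormedAddGroup E] {α β : ℝ} (hβ : 0 ≤ β)
    (hαβ : 2 * β + 1 / 2 < α) {v : (Fin d → ℤ) → E}
    (hv : Summable fun h => ‖v h‖ ^ 2 * korWeightSq α h) :
    Summable fun h => ‖v h‖ * korWeightSq β h := by
  refine (hv.add (summable_inv_korWeightSq (α := α - 2 * β) (by linarith))).of_nonneg_of_le
    (fun h => mul_nonneg (norm_nonneg _) (korWeightSq_pos β h).le) fun h => ?_
  have weight_eq : korWeightSq α h = korWeightSq β h ^ 2 * korWeightSq (α - 2 * β) h := by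
    rw [sq, ← korWeightSq_add hβ hβ, ← korWeightSq_add (by positivity) (by linarith)]
    ring_nf
  set c := korWeightSq (α - 2 * β) h
  have hc : 0 < c := korWeightSq_pos _ h
  set t := ‖v h‖ * korWeightSq β h
  have ht : 0 ≤ t := mul_nonneg (norm_nonneg _) (korWeightSq_pos β h).le
  have am_gm : 2 * t ≤ t ^ 2 * c + c⁻¹ := by
    have := mul_nonneg (sq_nonneg (t * c - 1)) (inv_nonneg.mpr hc.le)
    field_simp at this ⊢
    linarith
  calc t
    _ ≤ t ^ 2 * c + c⁻¹ := by linarith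
    _ = ‖v h‖ ^ 2 * korWeightSq α h + c⁻¹ := by rw [weight_eq, mul_pow, mul_assoc]

lemma one_add_normSq_sq_le (h : Fin d → ℤ) :
    (1 + normSq h) ^ 2 ≤ (1 + d) ^ 2 * korWeightSq 2 h := by
  have one_le : 1 ≤ korWeightSq 1 h := Finset.one_le_prod fun _ _ => le_max_right _ _
  have sq_le (j : Fin d) : (h j : ℝ) ^ 2 ≤ korWeightSq 1 h := by
    simpa [korWeightSq] using
      Finset.le_prod_max_one (Finset.mem_univ j) fun j => |(h j : ℝ)| ^ (2 * (1 : ℝ))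
  have normSq_le : normSq h ≤ d * korWeightSq 1 h := by
    simpa [normSq] using Finset.sum_le_sum fun j (_ : j ∈ Finset.univ) => sq_le j
  have normSq_nonneg : 0 ≤ normSq h := Finset.sum_nonneg fun _ _ => sq_nonneg _
  calc (1 + normSq h) ^ 2
    _ ≤ ((1 + d) * korWeightSq 1 h) ^ 2 := by
        gcongr
        linarith
    _ = (1 + d) ^ 2 * korWeightSq 2 h := by
        rw [mul_pow, sq (korWeightSq 1 h), ← korWeightSq_add zero_le_one zero_le_one,
          one_add_one_eq_two]

lemma summable_norm_mul_one_add_normSq_sq {E : Type*} [SeminormedAddGroup E] {α : ℝ}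
    (hα : 9 / 2 < α) {v : (Fin d → ℤ) → E}
    (hv : Summable fun h => ‖v h‖ ^ 2 * korWeightSq α h) :
    Summable fun h => ‖v h‖ * (1 + normSq h) ^ 2 := by
  refine ((summable_norm_mul_korWeightSq zero_le_two (by linarith) hv).mul_left
    ((1 + d : ℝ) ^ 2)).of_nonneg_of_le (fun h => by positivity) fun h => ?_
  grw [one_add_normSq_sq_le h]
  exact le_of_eq (by ring)

end Korobov

section Lattice

variable {d r : ℕ}

/-- The Euclidean norm on `ℤ^d`; the ambient norm of `Fin d → ℤ` is the supremum norm. -/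
def euclideanSeminorm (d : ℕ) : AddGroupSeminorm (Fin d → ℤ) :=
  (normAddGroupSeminorm (EuclideanSpace ℝ (Fin d))).comp <|
    AddMonoidHom.mk' (fun h => WithLp.toLp 2 fun j => (h j : ℝ)) fun h k => by ext; simp

lemma euclideanSeminorm_sq (h : Fin d → ℤ) : euclideanSeminorm d h ^ 2 = normSq h := by
  simp [euclideanSeminorm, normSq, EuclideanSpace.norm_sq_eq]

/-- The homomorphism `h ↦ (h·z_j mod n_j)_j` whose fibres are the aliasing classes of the rank-`r`
lattice. -/
def aliasHom (n : Fin r → ℕ) (z : Fin r → Fin d → ℤ) :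
    (Fin d → ℤ) →+ ∀ j, ZMod (n j) :=
  AddMonoidHom.mk' (fun h j => (dotZ h (z j) : ZMod (n j))) fun h k => by
    ext; simp [dotZ, add_mul, Finset.sum_add_distrib]

/-- The residues `(ξ_j mod n_j)_j` of a multi-index `ξ`, i.e. the aliasing class it labels. -/
def indexResidue (n : Fin r → ℕ) (ξ : ∀ j, Fin (n j)) (j : Fin r) : ZMod (n j) :=
  ((ξ j : ℕ) : ZMod (n j))

lemma indexResidue_injective (n : Fin r → ℕ) : Function.Injective (indexResidue n) :=
  fun ξ ξ' h => funext fun j => Fin.ext <|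
    CharP.natCast_injOn_Iio (ZMod (n j)) (n j) (ξ j).2 (ξ' j).2 (congrFun h j)

lemma DmatR_eq_diagonal (γ : ℝ) (n : Fin r → ℕ) (hfam : (∀ j, Fin (n j)) → Fin d → ℤ) :
    DmatR γ n hfam = diagonal fun ξ =>
      ((2 * Real.pi ^ 2 * γ * euclideanSeminorm d (hfam ξ) ^ 2 : ℝ) : ℂ) := by
  simp only [euclideanSeminorm_sq, DmatR]

lemma WmatR_eq_aliasMatrix (γ : ℝ) (vhat : (Fin d → ℤ) → ℂ) (n : Fin r → ℕ)
    (z : Fin r → Fin d → ℤ) :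
    WmatR γ vhat n z =
      aliasMatrix (aliasHom n z) (indexResidue n) fun h => 1 / (γ : ℂ) * vhat h := by
  ext ξ ξ'
  simp only [WmatR, aliasMatrix, of_apply, tsum_mul_left]
  exact congrArg _ (tsum_congr_set_coe vhat (Set.ext fun _ => funext_iff.symm))

lemma isMinimalAntiAliasing_of_normSq_le {n : Fin r → ℕ} {z : Fin r → Fin d → ℤ}
    {hfam : (∀ j, Fin (n j)) → Fin d → ℤ}
    (hcls : ∀ ξ j, (dotZ (hfam ξ) (z j) : ZMod (n j)) = ((ξ j : ℕ) : ZMod (n j)))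
    (hmin : ∀ ξ (h : Fin d → ℤ), (∀ j, (dotZ h (z j) : ZMod (n j)) = ((ξ j : ℕ) : ZMod (n j))) →
      normSq (hfam ξ) ≤ normSq h) :
    IsMinimalAntiAliasing (euclideanSeminorm d) (aliasHom n z) (indexResidue n) hfam where
  map_eq ξ := funext (hcls ξ)
  le_of_map_eq ξ h hh := by
    refine le_of_sq_le_sq ?_ (apply_nonneg _ _)
    simpa only [euclideanSeminorm_sq] using hmin ξ h (congrFun hh)

end Lattice

theorem rankr_second_commutator_bound_general
    {d r : ℕ} {γ : ℝ} (hγ : 0 < γ) {vhat : (Fin d → ℤ) → ℂ}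
    (hv : Summable fun h => ‖vhat h‖ * (1 + normSq h) ^ 2) :
    ∃ c₂ : ℝ, 0 < c₂ ∧
      ∀ (n : Fin r → ℕ) (z : Fin r → Fin d → ℤ) (hfam : (∀ j, Fin (n j)) → Fin d → ℤ),
        (∀ ξ j, (dotZ (hfam ξ) (z j) : ZMod (n j)) = ((ξ j : ℕ) : ZMod (n j))) →
        (∀ ξ (h : Fin d → ℤ),
          (∀ j, (dotZ h (z j) : ZMod (n j)) = ((ξ j : ℕ) : ZMod (n j))) →
            normSq (hfam ξ) ≤ normSq h) →
        ∀ y : (∀ j, Fin (n j)) → ℂ,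
          vecNorm (⁅DmatR γ n hfam, ⁅DmatR γ n hfam, WmatR γ vhat n z⁆⁆ *ᵥ y) ≤
            c₂ * vecNorm ((DmatR γ n hfam + 1) *ᵥ y) := by
  set τ := 2 * Real.pi ^ 2 * γ
  have hτ : 0 ≤ τ := by positivity
  set S := ∑' h, ‖1 / (γ : ℂ) * vhat h‖ * (1 + euclideanSeminorm d h ^ 2) ^ 2
  have : 0 ≤ S := tsum_nonneg fun h => by positivity
  have hv' : Summable fun h =>
      ‖1 / (γ : ℂ) * vhat h‖ * (1 + euclideanSeminorm d h ^ 2) ^ 2 := by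
    simpa only [norm_mul, mul_assoc, euclideanSeminorm_sq] using hv.mul_left ‖1 / (γ : ℂ)‖
  refine ⟨4 * τ * (τ + 1) * S + 1, by positivity, fun n z hfam hcls hmin y => ?_⟩
  rw [DmatR_eq_diagonal, WmatR_eq_aliasMatrix]
  refine (vecNorm_lie_lie_aliasMatrix_mulVec_le hτ (indexResidue_injective n)
    (isMinimalAntiAliasing_of_normSq_le hcls hmin) hv' y).trans ?_
  exact mul_le_mul_of_nonneg_right (le_add_of_nonneg_right zero_le_one) (vecNorm_nonneg _)

/-- **Rank-r lattice second commutator bound.** For `α > 9/2` and `‖v̂‖_α < ∞`,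
there is `c₂ > 0`, independent of the moduli, the generating vectors, the
minimal anti-aliasing family and `y`, such that
`‖[D,[D,W]] y‖₂ ≤ c₂ ‖(D + I)² y‖₂`. -/
theorem rankr_second_commutator_bound
    (d r : ℕ) (hr : 1 ≤ r) (γ : ℝ) (hγ : 0 < γ) (α : ℝ) (hα : 9 / 2 < α)
    (vhat : (Fin d → ℤ) → ℂ)
    (hv : Summable fun h : Fin d → ℤ => ‖vhat h‖ ^ 2 * korWeightSq α h) :
    ∃ c₂ : ℝ, 0 < c₂ ∧
      ∀ (n : Fin r → ℕ), (∀ j, 1 ≤ n j) → ∀ (z : Fin r → Fin d → ℤ)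
        (hfam : ((j : Fin r) → Fin (n j)) → Fin d → ℤ),
        (∀ ξ j, ((dotZ (hfam ξ) (z j) : ZMod (n j))) = ((ξ j : ℕ) : ZMod (n j))) →
        (∀ ξ (h : Fin d → ℤ),
            (∀ j, ((dotZ h (z j) : ZMod (n j))) = ((ξ j : ℕ) : ZMod (n j))) →
            normSq (hfam ξ) ≤ normSq h) →
        ∀ y : ((j : Fin r) → Fin (n j)) → ℂ,
          vecNorm ((DmatR γ n hfam * (DmatR γ n hfam * WmatR γ vhat n z
                - WmatR γ vhat n z * DmatR γ n hfam)
              - (DmatR γ n hfam * WmatR γ vhat n z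
                - WmatR γ vhat n z * DmatR γ n hfam) * DmatR γ n hfam).mulVec y)
            ≤ c₂ * vecNorm (((DmatR γ n hfam + 1) ^ 2).mulVec y) := by
  obtain ⟨c₂, hc₂, bound⟩ := rankr_second_commutator_bound_general (r := r) hγ
    (summable_norm_mul_one_add_normSq_sq hα hv)
  refine ⟨c₂, hc₂, fun n _ z hfam hcls hmin y => (bound n z hfam hcls hmin y).trans ?_⟩
  exact mul_le_mul_of_nonneg_left
    (vecNorm_diagonal_add_one_mulVec_le_sq (fun ξ => by unfold normSq; positivity) y) hc₂.le

end
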